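/- Let T be a tree, let 𝒜_T denote the set of static-included vertices of T, and let η(T) denote the number of α₃-critical edges of T. Then α₃(T) = |𝒜_T| + η(T). -/

import Mathlib

open SimpleGraph

/-- `l` is a (not necessarily induced) `k`-path in `G`: a list of `k` pairwise distinct
vertices in which consecutive vertices are adjacent. -/
def IsKPath {V : Type*} (G : SimpleGraph V) (k : ℕ) (l : List V) : Prop :=
  l.length = k ∧ l.Nodup ∧ l.Chain' G.Adj

/-- A `k`-matching in `G`: a finite set of pairwise vertex-disjoint `k`-paths. -/
def IsKMatching {V : Type*} (G : SimpleGraph V) (k : ℕ) (M : Finset (List V)) : Prop :=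
  (∀ l ∈ M, IsKPath G k l) ∧
    (M : Set (List V)).Pairwise fun l₁ l₂ => ∀ v ∈ l₁, v ∉ l₂

/-- The `k`-matching number `μ_k(G)`: the maximum cardinality of a `k`-matching. -/
noncomputable def kMatchNum {V : Type*} (G : SimpleGraph V) (k : ℕ) : ℕ :=
  sSup {n | ∃ M : Finset (List V), IsKMatching G k M ∧ M.card = n}

/-- A maximum `k`-matching: a `k`-matching of cardinality `μ_k(G)`. -/
def IsMaxKMatching {V : Type*} (G : SimpleGraph V) (k : ℕ) (M : Finset (List V)) : Prop :=
  IsKMatching G k M ∧ M.card = kMatchNum G k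

/-- A `k`-independent set: a set of vertices whose induced subgraph contains no `k`-path. -/
def IsKIndepSet {V : Type*} (G : SimpleGraph V) (k : ℕ) (S : Finset V) : Prop :=
  ∀ l : List V, IsKPath G k l → ¬ (∀ v ∈ l, v ∈ S)

/-- The `k`-independence number `α_k(G)`. -/
noncomputable def kIndepNum {V : Type*} (G : SimpleGraph V) (k : ℕ) : ℕ :=
  sSup {n | ∃ S : Finset V, IsKIndepSet G k S ∧ S.card = n}

/-- A `k`-vertex cover: a set of vertices meeting every `k`-path of `G`. -/
def IsKCover {V : Type*} (G : SimpleGraph V) (k : ℕ) (C : Finset V) : Prop :=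
  ∀ l : List V, IsKPath G k l → ∃ v ∈ l, v ∈ C

/-- The `k`-vertex cover number `τ_k(G)`. -/
noncomputable def kCoverNum {V : Type*} (G : SimpleGraph V) (k : ℕ) : ℕ :=
  sInf {n | ∃ C : Finset V, IsKCover G k C ∧ C.card = n}

/-- A dissociation set: a set of vertices inducing a subgraph of maximum degree at most 1,
i.e. every vertex of `S` has at most one neighbour inside `S`. -/
def IsDissocSet {V : Type*} (G : SimpleGraph V) (S : Finset V) : Prop :=
  ∀ v ∈ S, ∀ u ∈ S, ∀ w ∈ S, G.Adj v u → G.Adj v w → u = w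

/-- The dissociation number `α₃(G)`. -/
noncomputable def dissNum {V : Type*} (G : SimpleGraph V) : ℕ :=
  sSup {n | ∃ S : Finset V, IsDissocSet G S ∧ S.card = n}

/-- A maximum dissociation set: a dissociation set of cardinality `α₃(G)`. -/
def IsMaxDissocSet {V : Type*} (G : SimpleGraph V) (S : Finset V) : Prop :=
  IsDissocSet G S ∧ S.card = dissNum G

/-- `uv` is an `α₃`-critical edge of `G`: deleting it increases the dissociation number. -/
def IsAlpha3Critical {V : Type*} (G : SimpleGraph V) (u v : V) : Prop :=
  G.Adj u v ∧ dissNum G < dissNum (G.deleteEdges {s(u, v)})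

/-- `uv` is a `μ₃`-critical edge of `G`: deleting it decreases the `3`-matching number. -/
def IsMu3Critical {V : Type*} (G : SimpleGraph V) (u v : V) : Prop :=
  G.Adj u v ∧ kMatchNum (G.deleteEdges {s(u, v)}) 3 < kMatchNum G 3

/-- An insulated `α₃`-critical edge: an `α₃`-critical edge sharing no end-vertex with any
other `α₃`-critical edge. -/
def IsInsulated {V : Type*} (G : SimpleGraph V) (u v : V) : Prop :=
  IsAlpha3Critical G u v ∧
    ∀ x y : V, IsAlpha3Critical G x y → s(x, y) ≠ s(u, v) →
      x ≠ u ∧ x ≠ v ∧ y ≠ u ∧ y ≠ v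

/-- A flexible vertex: one lying in some but not all maximum dissociation sets. -/
def IsFlexible {V : Type*} (G : SimpleGraph V) (v : V) : Prop :=
  (∃ S : Finset V, IsMaxDissocSet G S ∧ v ∈ S) ∧
    (∃ S : Finset V, IsMaxDissocSet G S ∧ v ∉ S)

/-- The set of static-included vertices: vertices lying in every maximum dissociation set. -/
def staticIncluded {V : Type*} (G : SimpleGraph V) : Set V :=
  {v | ∀ S : Finset V, IsMaxDissocSet G S → v ∈ S}

/-- The set of static-excluded vertices: vertices lying in no maximum dissociation set. -/
def staticExcluded {V : Type*} (G : SimpleGraph V) : Set V :=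
  {v | ∀ S : Finset V, IsMaxDissocSet G S → v ∉ S}

/-- The (unordered) edge `uv` occurs as an edge of the path recorded by the list `l`. -/
def EdgeInList {V : Type*} (l : List V) (u v : V) : Prop :=
  ∃ p ∈ l.zip l.tail, p = (u, v) ∨ p = (v, u)

/-! A forest can be rooted so that every path has a *top* vertex, the ancestor of all the others.
Greedily picking a path whose top is as deep as possible shows that a maximum family of disjoint
`3`-paths has the size of a minimum `3`-vertex cover, that is, `|V| - α₃`. Fix such a family `M`.
Every maximum dissociation set misses a vertex on each path of `M` and none off these paths, so the
vertices that are not static-included all lie on the paths of `M`, with at least one on each path.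

If maximum dissociation sets `S₁`, `S₂` miss vertices of one path of `M` on different sides of an
edge `e` of that path, exchange them across the bridge `e`. The two resulting sets are dissociation
sets of `G - e` of total size `2 α₃`, and one of them misses two vertices of that path, so it has
size less than `α₃`; the other is larger than `α₃`, so `e` is critical. Consequently the critical
edges are the edges of paths of `M` both of whose ends fail to be static-included, and on each path
these ends form a subpath, which has one more vertex than it has edges. -/

section DissocSet

variable {V : Type*} {G H : SimpleGraph V} {S T : Finset V}

lemma isKPath_three_iff {l : List V} :
    IsKPath G 3 l ↔ ∃ a b c, l = [a, b, c] ∧ G.Adj a b ∧ G.Adj b c ∧ a ≠ c := by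
  constructor
  · rintro ⟨hlen, hnodup, hchain⟩
    obtain ⟨a, b, c, rfl⟩ := List.length_eq_three.1 hlen
    obtain ⟨hab, hbc⟩ := List.isChain_cons_cons.1 hchain
    exact ⟨a, b, c, rfl, hab, List.isChain_pair.1 hbc, by grind⟩
  · rintro ⟨a, b, c, rfl, hab, hbc, hac⟩
    exact ⟨rfl, by simp [hab.ne, hbc.ne, hac],
      List.isChain_cons_cons.2 ⟨hab, List.isChain_pair.2 hbc⟩⟩

lemma isDissocSet_iff_isKIndepSet : IsDissocSet G S ↔ IsKIndepSet G 3 S := by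
  constructor
  · intro hS l hl hlS
    obtain ⟨a, b, c, rfl, hab, hbc, hac⟩ := isKPath_three_iff.1 hl
    simp only [List.forall_mem_cons] at hlS
    exact hac (hS b hlS.2.1 a hlS.1 c hlS.2.2.1 hab.symm hbc)
  · intro hS b hb a ha c hc hba hbc
    by_contra hac
    exact hS [a, b, c] (isKPath_three_iff.2 ⟨a, b, c, rfl, hba.symm, hbc, hac⟩)
      (by simp [ha, hb, hc])

lemma IsDissocSet.exists_notMem (hS : IsDissocSet G S) {l : List V} (hl : IsKPath G 3 l) :
    ∃ v ∈ l, v ∉ S := by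
  simpa using isDissocSet_iff_isKIndepSet.1 hS l hl

lemma IsKCover.isDissocSet_compl [Fintype V] [DecidableEq V] {C : Finset V}
    (hC : IsKCover G 3 C) : IsDissocSet G Cᶜ := by
  rw [isDissocSet_iff_isKIndepSet]
  intro l hl hlC
  obtain ⟨v, hvl, hvC⟩ := hC l hl
  exact Finset.mem_compl.1 (hlC v hvl) hvC

lemma IsDissocSet.anti (hS : IsDissocSet H S) (hGH : G ≤ H) : IsDissocSet G S :=
  fun v hv u hu w hw hvu hvw => hS v hv u hu w hw (hGH hvu) (hGH hvw)

lemma IsDissocSet.erase_of_deleteEdges [DecidableEq V] {u v : V}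
    (hS : IsDissocSet (G.deleteEdges {s(u, v)}) S) : IsDissocSet G (S.erase u) := by
  intro x hx y hy z hz hxy hxz
  simp only [Finset.mem_erase] at hx hy hz
  refine hS x hx.2 y hy.2 z hz.2 ?_ ?_ <;> simp_all [deleteEdges_adj]

/-- The set that agrees with `S` where `p` holds and with `T` elsewhere. It exchanges two
dissociation sets across a bridge. -/
def paste (p : V → Prop) [DecidablePred p] [DecidableEq V] (S T : Finset V) : Finset V :=
  {v ∈ S | p v} ∪ {v ∈ T | ¬ p v}

section Paste

variable {p : V → Prop} [DecidablePred p] [DecidableEq V]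

lemma mem_paste {v : V} : v ∈ paste p S T ↔ v ∈ S ∧ p v ∨ v ∈ T ∧ ¬ p v := by
  simp [paste]

lemma card_paste_add_card_paste :
    (paste p S T).card + (paste p T S).card = S.card + T.card := by
  simp only [paste, Finset.card_union_of_disjoint (Finset.disjoint_filter_filter_not _ _ _)]
  rw [← S.card_filter_add_card_filter_not p, ← T.card_filter_add_card_filter_not p]
  ring

lemma IsDissocSet.paste (hS : IsDissocSet G S) (hT : IsDissocSet G T)
    (hp : ∀ v w, G.Adj v w → (p v ↔ p w)) : IsDissocSet G (paste p S T) := by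
  intro v hv u hu w hw hvu hvw
  have hpu := hp v u hvu
  have hpw := hp v w hvw
  rw [mem_paste] at hv hu hw
  by_cases hpv : p v
  · exact hS v (by tauto) u (by tauto) w (by tauto) hvu hvw
  · exact hT v (by tauto) u (by tauto) w (by tauto) hvu hvw

end Paste

end DissocSet

section DissNum

variable {V : Type*} {G : SimpleGraph V} {S : Finset V}

lemma bddAbove_card_isDissocSet [Finite V] (G : SimpleGraph V) :
    BddAbove {n | ∃ S : Finset V, IsDissocSet G S ∧ S.card = n} := by
  have := Fintype.ofFinite V
  exact ⟨Fintype.card V, by rintro n ⟨S, -, rfl⟩; exact S.card_le_univ⟩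

lemma IsDissocSet.card_le_dissNum [Finite V] (hS : IsDissocSet G S) : S.card ≤ dissNum G :=
  le_csSup (bddAbove_card_isDissocSet G) ⟨S, hS, rfl⟩

lemma exists_isMaxDissocSet [Finite V] (G : SimpleGraph V) :
    ∃ S : Finset V, IsMaxDissocSet G S :=
  Nat.sSup_mem (s := {n | ∃ S : Finset V, IsDissocSet G S ∧ S.card = n})
    ⟨0, ∅, by simp [IsDissocSet], rfl⟩ (bddAbove_card_isDissocSet G)

lemma notMem_staticIncluded_iff {v : V} :
    v ∉ staticIncluded G ↔ ∃ S, IsMaxDissocSet G S ∧ v ∉ S := by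
  simp [staticIncluded]

end DissNum

section Rooting

variable {V : Type*} {G : SimpleGraph V}

/-- A rooting of a forest: every edge joins a vertex to its parent, which is less deep. The values
of `parent` at the roots are irrelevant. -/
structure Rooting (G : SimpleGraph V) where
  parent : V → V
  depth : V → ℕ
  parent_eq_of_adj : ∀ ⦃v w⦄, G.Adj v w →
    parent v = w ∧ depth w < depth v ∨ parent w = v ∧ depth v < depth w

lemma nonempty_rooting_of_isTree (hG : G.IsTree) : Nonempty (Rooting G) := by
  obtain ⟨root⟩ := hG.connected.nonempty
  choose p hp using fun v => (hG.connected root v).exists_isPath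
  have penultimate_eq : ∀ v w, G.Adj v w → v ∈ (p w).support →
      (p w).penultimate = v ∧ (p v).length < (p w).length := fun v w hvw hv => by
    rw [hG.isAcyclic.path_concat (hp v) (hp w) hvw hv]
    simp
  refine ⟨⟨fun v => (p v).penultimate, fun v => (p v).length, fun v w hvw => ?_⟩⟩
  by_cases hv : v ∈ (p w).support
  · exact .inr (penultimate_eq v w hvw hv)
  · exact .inl (penultimate_eq w v hvw.symm
      (hG.isAcyclic.mem_support_of_ne_mem_support_of_adj_of_isPath (hp v) (hp w) hvw hv))

lemma nonempty_rooting_of_isAcyclic (hG : G.IsAcyclic) : Nonempty (Rooting G) := by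
  cases isEmpty_or_nonempty V
  · exact ⟨⟨id, fun _ => 0, fun v => isEmptyElim v⟩⟩
  · obtain ⟨T, hGT, -, hT⟩ := connected_top.exists_isTree_le_of_le_of_isAcyclic le_top hG
    obtain ⟨r⟩ := nonempty_rooting_of_isTree hT
    exact ⟨⟨r.parent, r.depth, fun v w hvw => r.parent_eq_of_adj (hGT hvw)⟩⟩

/-- `t` is the top of the path `l`: the path climbs from each of its vertices to `t`. -/
def Rooting.IsTop (r : Rooting G) (t : V) (l : List V) : Prop :=
  t ∈ l ∧ ∀ v ∈ l, v ≠ t → r.parent v ∈ l ∧ r.depth (r.parent v) < r.depth v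

namespace Rooting

lemma exists_isTop (r : Rooting G) {l : List V} (hne : l ≠ []) (hnodup : l.Nodup)
    (hchain : l.IsChain G.Adj) : ∃ t, r.IsTop t l := by
  induction l with
  | nil => exact absurd rfl hne
  | cons a l ih =>
    rcases l with _ | ⟨b, l⟩
    · exact ⟨a, by simp [IsTop]⟩
    rw [List.isChain_cons_cons] at hchain
    obtain ⟨t, ht, hclimb⟩ := ih (List.cons_ne_nil b l) hnodup.of_cons hchain.2
    rcases r.parent_eq_of_adj hchain.1 with ⟨hparent, hdepth⟩ | ⟨hparent, hdepth⟩
    · refine ⟨t, List.mem_cons_of_mem a ht, ?_⟩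
      grind
    · have hbt : b = t := by grind
      refine ⟨a, List.mem_cons_self, ?_⟩
      grind

lemma IsTop.depth_le {r : Rooting G} {t v : V} {l : List V} (ht : r.IsTop t l) (hv : v ∈ l) :
    r.depth t ≤ r.depth v := by
  induction h : r.depth v using Nat.strong_induction_on generalizing v with
  | _ n ih =>
    by_cases hvt : v = t
    · rw [← h, hvt]
    · obtain ⟨hparent, hdepth⟩ := ht.2 v hv hvt
      exact (ih _ (h ▸ hdepth) hparent rfl).trans (h ▸ hdepth.le)

/-- Climb from `v` inside both paths until reaching the deeper top. -/
lemma IsTop.mem_of_depth_le {r : Rooting G} {t t' v : V} {l l' : List V} (ht : r.IsTop t l)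
    (ht' : r.IsTop t' l') (hle : r.depth t' ≤ r.depth t) (hv : v ∈ l) (hv' : v ∈ l') :
    t ∈ l' := by
  induction h : r.depth v using Nat.strong_induction_on generalizing v with
  | _ n ih =>
    by_cases hvt : v = t
    · exact hvt ▸ hv'
    · obtain ⟨hparent, hdepth⟩ := ht.2 v hv hvt
      have hvt' : v ≠ t' := by
        rintro rfl
        exact (hle.trans (ht.depth_le hparent)).not_gt hdepth
      exact ih _ (h ▸ hdepth) hparent (ht'.2 v hv' hvt').1 rfl

end Rooting

lemma exists_path_vertex_forall_disjoint_of_notMem (hG : G.IsAcyclic) {k : ℕ} (hk : k ≠ 0)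
    {P : Finset (List V)} (hP : ∀ l ∈ P, IsKPath G k l) (hne : P.Nonempty) :
    ∃ l ∈ P, ∃ t ∈ l, ∀ l' ∈ P, t ∉ l' → ∀ v ∈ l, v ∉ l' := by
  obtain ⟨r⟩ := nonempty_rooting_of_isAcyclic hG
  have exists_top : ∀ l : P, ∃ t, r.IsTop t l := fun ⟨l, hl⟩ => by
    obtain ⟨hlen, hnodup, hchain⟩ := hP l hl
    exact r.exists_isTop (List.ne_nil_of_length_pos (by lia)) hnodup hchain
  choose top htop using exists_top
  have := hne.to_subtype
  obtain ⟨l, hdeepest⟩ := Finite.exists_max fun l => r.depth (top l)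
  exact ⟨l, l.2, top l, (htop l).1, fun l' hl' ht v hv hv' =>
    ht ((htop l).mem_of_depth_le (htop ⟨l', hl'⟩) (hdeepest _) hv hv')⟩

end Rooting

section Matching

variable {V : Type*} {G : SimpleGraph V} {k : ℕ}

lemma exists_isKMatching_subset_hitting_set (hG : G.IsAcyclic) (hk : k ≠ 0) (P : Finset (List V))
    (hP : ∀ l ∈ P, IsKPath G k l) :
    ∃ M ⊆ P, ∃ C : Finset V, IsKMatching G k M ∧ (∀ l ∈ P, ∃ v ∈ l, v ∈ C) ∧
      C.card ≤ M.card := by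
  classical
  induction P using Finset.strongInduction with
  | H P ih =>
    obtain rfl | hne := P.eq_empty_or_nonempty
    · exact ⟨∅, subset_rfl, ∅, by simp [IsKMatching]⟩
    obtain ⟨l, hl, t, htl, hdisj⟩ := exists_path_vertex_forall_disjoint_of_notMem hG hk hP hne
    obtain ⟨M, hMP, C, hM, hC, hCM⟩ := ih {l' ∈ P | t ∉ l'}
      (Finset.filter_ssubset.2 ⟨l, hl, not_not_intro htl⟩)
      fun l' hl' => hP l' (Finset.mem_filter.1 hl').1
    have hMt : ∀ l' ∈ M, l' ∈ P ∧ t ∉ l' := fun l' hl' => Finset.mem_filter.1 (hMP hl')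
    refine ⟨insert l M, ?_, insert t C, ⟨?_, ?_⟩, ?_, ?_⟩
    · exact Finset.insert_subset hl fun l' hl' => (hMt l' hl').1
    · exact Finset.forall_mem_insert _ _ _ |>.2 ⟨hP l hl, hM.1⟩
    · rw [Finset.coe_insert]
      refine hM.2.insert fun l' hl' _ => ?_
      have hll' := hdisj l' (hMt l' hl').1 (hMt l' hl').2
      exact ⟨hll', fun v hv' hv => hll' v hv hv'⟩
    · intro l' hl'
      by_cases ht : t ∈ l'
      · exact ⟨t, ht, Finset.mem_insert_self t C⟩
      · obtain ⟨v, hv, hvC⟩ := hC l' (Finset.mem_filter.2 ⟨hl', ht⟩)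
        exact ⟨v, hv, Finset.mem_insert_of_mem hvC⟩
    · rw [Finset.card_insert_of_notMem fun hlM => (hMt l hlM).2 htl]
      exact (Finset.card_insert_le t C).trans (Nat.add_le_add_right hCM 1)

lemma exists_isKMatching_isKCover_card_le [Finite V] (hG : G.IsAcyclic) (hk : k ≠ 0) :
    ∃ (M : Finset (List V)) (C : Finset V),
      IsKMatching G k M ∧ IsKCover G k C ∧ C.card ≤ M.card := by
  have hfinite : {l | IsKPath G k l}.Finite :=
    (List.finite_length_eq V k).subset fun l hl => hl.1
  obtain ⟨M, -, C, hM, hC, hCM⟩ :=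
    exists_isKMatching_subset_hitting_set hG hk hfinite.toFinset fun l hl => by simpa using hl
  exact ⟨M, C, hM, fun l hl => hC l (by simpa using hl), hCM⟩

lemma IsKMatching.card_le_card_of_hits {M : Finset (List V)} (hM : IsKMatching G k M)
    {C : Finset V} (hC : ∀ l ∈ M, ∃ v ∈ l, v ∈ C) : M.card ≤ C.card := by
  refine Finset.card_le_card_of_forall_subsingleton (fun l v => v ∈ l)
    (fun l hl => (hC l hl).imp fun v hv => ⟨hv.2, hv.1⟩) ?_
  rintro v - l ⟨hl, hv⟩ l' ⟨hl', hv'⟩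
  exact hM.2.eq hl hl' fun hdisj => hdisj v hv hv'

lemma IsKPath.deleteEdges {l : List V} (hl : IsKPath G k l) {u v : V}
    (huv : ¬ (u ∈ l ∧ v ∈ l)) : IsKPath (G.deleteEdges {s(u, v)}) k l := by
  refine ⟨hl.1, hl.2.1, hl.2.2.imp_of_mem_imp fun x y hx hy hxy => ?_⟩
  simp only [deleteEdges_adj, Set.mem_singleton_iff, Sym2.eq_iff]
  grind

lemma exists_isKMatching_three_card_add_dissNum [Fintype V] (hG : G.IsAcyclic) :
    ∃ M, IsKMatching G 3 M ∧ M.card + dissNum G = Fintype.card V := by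
  classical
  obtain ⟨M, C, hM, hC, hCM⟩ := exists_isKMatching_isKCover_card_le hG three_ne_zero
  obtain ⟨S, hS, hScard⟩ := exists_isMaxDissocSet G
  have hCcompl := hC.isDissocSet_compl.card_le_dissNum
  have hMS : M.card ≤ Sᶜ.card := hM.card_le_card_of_hits fun l hl => by
    simpa using hS.exists_notMem (hM.1 l hl)
  rw [Finset.card_compl] at hCcompl hMS
  have := S.card_le_univ
  exact ⟨M, hM, by lia⟩

end Matching

section Critical

variable {V : Type*} {G : SimpleGraph V} {u v : V}

lemma IsAlpha3Critical.symm (h : IsAlpha3Critical G u v) : IsAlpha3Critical G v u :=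
  ⟨h.1.symm, Sym2.eq_swap (a := u) (b := v) ▸ h.2⟩

lemma IsAlpha3Critical.notMem_staticIncluded [Finite V] (h : IsAlpha3Critical G u v) :
    u ∉ staticIncluded G := by
  classical
  obtain ⟨S, hS, hScard⟩ := exists_isMaxDissocSet (G.deleteEdges {s(u, v)})
  have hSu : IsDissocSet G (S.erase u) := hS.erase_of_deleteEdges
  have hle := hSu.card_le_dissNum
  have hlt := h.2
  have hpred := S.pred_card_le_card_erase (a := u)
  exact notMem_staticIncluded_iff.2 ⟨S.erase u, ⟨hSu, by lia⟩, S.notMem_erase u⟩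

/-- The set of critical edges of `G`; its cardinality is the `η(G)` of the paper. -/
def criticalEdges (G : SimpleGraph V) : Set (Sym2 V) :=
  {e | ∃ u v, e = s(u, v) ∧ IsAlpha3Critical G u v}

lemma mk_mem_criticalEdges : s(u, v) ∈ criticalEdges G ↔ IsAlpha3Critical G u v := by
  refine ⟨?_, fun h => ⟨u, v, rfl, h⟩⟩
  rintro ⟨x, y, hxy, h⟩
  rcases Sym2.eq_iff.1 hxy with ⟨rfl, rfl⟩ | ⟨rfl, rfl⟩
  exacts [h, h.symm]

lemma not_reachable_deleteEdges_of_adj_of_adj {a b c : V} (hG : G.IsAcyclic) (hab : G.Adj a b)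
    (hbc : G.Adj b c) (hac : a ≠ c) : ¬ (G.deleteEdges {s(a, b)}).Reachable a c := by
  intro h
  have hcb : (G.deleteEdges {s(a, b)}).Adj c b := by
    simp [deleteEdges_adj, hbc.symm, hac.symm, hbc.ne']
  exact isBridge_iff.1 (isAcyclic_iff_forall_adj_isBridge.1 hG hab) (h.trans hcb.reachable)

section TightMatching

variable [Fintype V] {M : Finset (List V)} {l : List V}

lemma IsKMatching.exists_mem_of_notMem_staticIncluded (hM : IsKMatching G 3 M)
    (hcard : M.card + dissNum G = Fintype.card V) (hv : v ∉ staticIncluded G) :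
    ∃ l ∈ M, v ∈ l := by
  classical
  obtain ⟨S, ⟨hS, hScard⟩, hvS⟩ := notMem_staticIncluded_iff.1 hv
  by_contra! hvM
  have hle : M.card ≤ (Sᶜ.erase v).card := hM.card_le_card_of_hits fun l hl => by
    obtain ⟨w, hwl, hwS⟩ := hS.exists_notMem (hM.1 l hl)
    exact ⟨w, hwl, Finset.mem_erase.2
      ⟨fun h => hvM l hl (h ▸ hwl), Finset.mem_compl.2 hwS⟩⟩
  have hlt : (Sᶜ.erase v).card < Sᶜ.card := Finset.card_erase_lt_of_mem (by simpa using hvS)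
  have := S.card_compl_add_card
  lia

lemma IsAlpha3Critical.exists_mem_isKMatching (h : IsAlpha3Critical G u v)
    (hM : IsKMatching G 3 M) (hcard : M.card + dissNum G = Fintype.card V) :
    ∃ l ∈ M, u ∈ l ∧ v ∈ l := by
  classical
  by_contra! hno
  obtain ⟨S, hS, hScard⟩ := exists_isMaxDissocSet (G.deleteEdges {s(u, v)})
  have hle : M.card ≤ Sᶜ.card := hM.card_le_card_of_hits fun l hl => by
    simpa using hS.exists_notMem ((hM.1 l hl).deleteEdges (not_and.2 (hno l hl)))
  have := S.card_compl_add_card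
  have := h.2
  lia

lemma IsKMatching.isAlpha3Critical_of_notMem_staticIncluded (hM : IsKMatching G 3 M)
    (hcard : M.card + dissNum G = Fintype.card V) (hl : l ∈ M) {a b w : V} (ha : a ∈ l)
    (hw : w ∈ l) (hab : G.Adj a b) (haw : ¬ (G.deleteEdges {s(a, b)}).Reachable a w)
    (haA : a ∉ staticIncluded G) (hwA : w ∉ staticIncluded G) : IsAlpha3Critical G a b := by
  classical
  obtain ⟨S, ⟨hS, hScard⟩, haS⟩ := notMem_staticIncluded_iff.1 haA
  obtain ⟨T, ⟨hT, hTcard⟩, hwT⟩ := notMem_staticIncluded_iff.1 hwA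
  set H := G.deleteEdges {s(a, b)}
  have hHG : H ≤ G := G.deleteEdges_le _
  have hside : ∀ x y, H.Adj x y → (H.Reachable a x ↔ H.Reachable a y) := fun x y hxy =>
    ⟨(·.trans hxy.reachable), (·.trans hxy.symm.reachable)⟩
  have hST := (hS.anti hHG).paste (hT.anti hHG) hside
  have hTS := (hT.anti hHG).paste (hS.anti hHG) hside
  set C := (paste (H.Reachable a) S T)ᶜ with hC
  have haC : a ∈ C := by simp [hC, mem_paste, haS]
  have hwC : w ∈ C := by simp [hC, mem_paste, hwT, haw]
  have hle : M.card ≤ (C.erase a).card := hM.card_le_card_of_hits fun l' hl' => by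
    obtain rfl | hne := eq_or_ne l' l
    · exact ⟨w, hw, Finset.mem_erase.2 ⟨fun h => haw (by rw [h]), hwC⟩⟩
    · have hal' : a ∉ l' := hM.2 hl hl' hne.symm a ha
      obtain ⟨x, hxl', hx⟩ := hST.exists_notMem ((hM.1 l' hl').deleteEdges fun h => hal' h.1)
      exact ⟨x, hxl', Finset.mem_erase.2 ⟨fun h => hal' (h ▸ hxl'), Finset.mem_compl.2 hx⟩⟩
  have hlt : (C.erase a).card < C.card := Finset.card_erase_lt_of_mem haC
  have hsum := card_paste_add_card_paste (p := H.Reachable a) (S := S) (T := T)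
  have hcompl := (paste (H.Reachable a) S T).card_compl_add_card
  have := hTS.card_le_dissNum
  exact ⟨hab, by lia⟩

lemma IsKMatching.isAlpha3Critical_iff {a b : V} (hG : G.IsAcyclic) (hM : IsKMatching G 3 M)
    (hcard : M.card + dissNum G = Fintype.card V) (hl : l ∈ M) (ha : a ∈ l) (hb : b ∈ l)
    (hab : G.Adj a b) :
    IsAlpha3Critical G a b ↔ a ∉ staticIncluded G ∧ b ∉ staticIncluded G := by
  refine ⟨fun h => ⟨h.notMem_staticIncluded, h.symm.notMem_staticIncluded⟩, fun h => ?_⟩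
  exact hM.isAlpha3Critical_of_notMem_staticIncluded hcard hl ha hb hab
    (isBridge_iff.1 (isAcyclic_iff_forall_adj_isBridge.1 hG hab)) h.1 h.2

end TightMatching

end Critical

section Counting

variable {V : Type*} {G : SimpleGraph V} {M : Finset (List V)} {a b c : V}

lemma ncard_eq_sum_ncard_of_existsUnique {α ι : Type*} {X : Set α} (hX : X.Finite)
    {I : Finset ι} {r : α → ι → Prop} (hr : ∀ x ∈ X, ∃! i, i ∈ I ∧ r x i) :
    X.ncard = ∑ i ∈ I, {x ∈ X | r x i}.ncard := by
  classical
  lift X to Finset α using hX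
  have hfiber : ∀ i, {x ∈ (X : Set α) | r x i}.ncard = (X.bipartiteBelow r i).card := fun i => by
    rw [← Set.ncard_coe_finset, Finset.coe_bipartiteBelow]
    rfl
  simp_rw [hfiber, ← Finset.sum_card_bipartiteAbove_eq_sum_card_bipartiteBelow]
  rw [Set.ncard_coe_finset, Finset.card_eq_sum_ones]
  refine Finset.sum_congr rfl fun x hx => ?_
  obtain ⟨i, hi, huniq⟩ := hr x hx
  refine (Finset.card_eq_one.2 ⟨i, Finset.ext fun j => ?_⟩).symm
  rw [Finset.mem_bipartiteAbove, Finset.mem_singleton]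
  exact ⟨huniq j, fun hji => hji ▸ hi⟩

lemma ncard_three_vertices_eq_ncard_two_edges_add_one (hab : a ≠ b) (hbc : b ≠ c)
    (hac : a ≠ c) {X : Set V} (hX : a ∈ X ∨ b ∈ X ∨ c ∈ X) (hconvex : a ∈ X → c ∈ X → b ∈ X) :
    {v ∈ X | v ∈ [a, b, c]}.ncard =
      {e ∈ ({s(a, b), s(b, c)} : Set (Sym2 V)) | ∀ v ∈ e, v ∈ X}.ncard + 1 := by
  classical
  have hvertices : {v ∈ X | v ∈ [a, b, c]} = ↑({v ∈ ({a, b, c} : Finset V) | v ∈ X}) := by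
    ext; simp [and_comm]
  have hedges : {e ∈ ({s(a, b), s(b, c)} : Set (Sym2 V)) | ∀ v ∈ e, v ∈ X} =
      ↑({e ∈ ({s(a, b), s(b, c)} : Finset (Sym2 V)) | ∀ v ∈ e, v ∈ X}) := by
    ext; simp
  have : s(a, b) ≠ s(b, c) := by grind
  rw [hvertices, hedges, Set.ncard_coe_finset, Set.ncard_coe_finset]
  by_cases ha : a ∈ X <;> by_cases hb : b ∈ X <;> by_cases hc : c ∈ X <;>
    simp_all [Finset.filter_insert, Finset.filter_singleton]

lemma IsKMatching.setOf_criticalEdges_eq [Fintype V] (hG : G.IsAcyclic) (hM : IsKMatching G 3 M)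
    (hcard : M.card + dissNum G = Fintype.card V) (hl : [a, b, c] ∈ M) (hab : G.Adj a b)
    (hbc : G.Adj b c) (hac : ¬ G.Adj a c) :
    {e ∈ criticalEdges G | ∀ v ∈ e, v ∈ [a, b, c]} =
      {e ∈ ({s(a, b), s(b, c)} : Set (Sym2 V)) | ∀ v ∈ e, v ∈ (staticIncluded G)ᶜ} := by
  ext e
  induction e with | _ x y
  simp only [Set.mem_ofPred_eq, mk_mem_criticalEdges, Sym2.mem_iff, forall_eq_or_imp, forall_eq,
    Set.mem_insert_iff, Set.mem_singleton_iff, Set.mem_compl_iff]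
  constructor
  · rintro ⟨hxy, hx, hy⟩
    refine ⟨?_, hxy.notMem_staticIncluded, hxy.symm.notMem_staticIncluded⟩
    have hadj := hxy.1
    have := hadj.ne
    have := hadj.symm
    grind
  · rintro ⟨h, hx, hy⟩
    have hxl : x ∈ [a, b, c] ∧ y ∈ [a, b, c] := by grind
    have hadj : G.Adj x y := by
      rw [← mem_edgeSet]
      rcases h with h | h <;> rw [h]
      exacts [hab, hbc]
    exact ⟨(hM.isAlpha3Critical_iff hG hcard hl hxl.1 hxl.2 hadj).2 ⟨hx, hy⟩, hxl⟩

lemma IsKMatching.ncard_compl_staticIncluded_inter [Fintype V] (hG : G.IsAcyclic)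
    (hM : IsKMatching G 3 M) (hcard : M.card + dissNum G = Fintype.card V) {l : List V}
    (hl : l ∈ M) :
    {v ∈ (staticIncluded G)ᶜ | v ∈ l}.ncard =
      {e ∈ criticalEdges G | ∀ v ∈ e, v ∈ l}.ncard + 1 := by
  obtain ⟨a, b, c, rfl, hab, hbc, hac⟩ := isKPath_three_iff.1 (hM.1 l hl)
  have hreach := not_reachable_deleteEdges_of_adj_of_adj hG hab hbc hac
  have hnadj : ¬ G.Adj a c := fun h =>
    hreach (Adj.reachable (by simp [deleteEdges_adj, h, hbc.ne', hac.symm]))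
  rw [hM.setOf_criticalEdges_eq hG hcard hl hab hbc hnadj]
  refine ncard_three_vertices_eq_ncard_two_edges_add_one hab.ne hbc.ne hac ?_ fun ha hc => ?_
  · obtain ⟨S, hS⟩ := exists_isMaxDissocSet G
    obtain ⟨v, hv, hvS⟩ := hS.1.exists_notMem (hM.1 _ hl)
    have hvA : v ∉ staticIncluded G := notMem_staticIncluded_iff.2 ⟨S, hS, hvS⟩
    simp only [List.mem_cons, List.not_mem_nil, or_false] at hv
    rcases hv with rfl | rfl | rfl <;> simp [hvA]
  · exact (hM.isAlpha3Critical_of_notMem_staticIncluded hcard hl (by simp) (by simp) hab hreach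
      ha hc).symm.notMem_staticIncluded

theorem tree_dissNum_eq_staticIncluded_add_criticalEdges_general [Finite V] (hG : G.IsAcyclic) :
    dissNum G = (staticIncluded G).ncard + (criticalEdges G).ncard := by
  have := Fintype.ofFinite V
  obtain ⟨M, hM, hcard⟩ := exists_isKMatching_three_card_add_dissNum hG
  have hvertices : (staticIncluded G)ᶜ.ncard = ∑ l ∈ M, {v ∈ (staticIncluded G)ᶜ | v ∈ l}.ncard :=
    ncard_eq_sum_ncard_of_existsUnique (Set.toFinite _) fun v hv => by
      obtain ⟨l, hl, hvl⟩ := hM.exists_mem_of_notMem_staticIncluded hcard hv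
      exact ⟨l, ⟨hl, hvl⟩, fun l' ⟨hl', hvl'⟩ => hM.2.eq hl' hl fun h => h v hvl' hvl⟩
  have hedges : (criticalEdges G).ncard = ∑ l ∈ M, {e ∈ criticalEdges G | ∀ v ∈ e, v ∈ l}.ncard :=
    ncard_eq_sum_ncard_of_existsUnique (Set.toFinite _) fun e he => by
      obtain ⟨u, v, rfl, huv⟩ := he
      obtain ⟨l, hl, hul, hvl⟩ := huv.exists_mem_isKMatching hM hcard
      refine ⟨l, ⟨hl, by simp [hul, hvl]⟩, fun l' ⟨hl', h'⟩ => ?_⟩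
      exact hM.2.eq hl' hl fun h => h u (h' u (Sym2.mem_mk_left u v)) hul
  have hexcess : (staticIncluded G)ᶜ.ncard = (criticalEdges G).ncard + M.card := by
    rw [hvertices, Finset.sum_congr rfl fun l hl => hM.ncard_compl_staticIncluded_inter hG hcard hl,
      Finset.sum_add_distrib, ← hedges, Finset.card_eq_sum_ones]
  have := Set.ncard_add_ncard_compl (staticIncluded G)
  rw [Nat.card_eq_fintype_card] at this
  lia

end Counting

/-- For a tree `T`, `α₃(T) = |𝒜_T| + η(T)`, where `𝒜_T` is the set of static-included
vertices and `η(T)` is the number of `α₃`-critical edges of `T`. -/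
theorem tree_dissNum_eq_staticIncluded_add_criticalEdges {V : Type*} [Fintype V]
    [DecidableEq V] (T : SimpleGraph V) (hT : T.IsTree) :
    dissNum T = (staticIncluded T).ncard +
      {e : Sym2 V | ∃ u v : V, e = s(u, v) ∧ IsAlpha3Critical T u v}.ncard :=
  tree_dissNum_eq_staticIncluded_add_criticalEdges_general hT.isAcyclic
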